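/- The axial boost field u_*(s) := −a·sinh(2s)/B(s) satisfies the self-adjoint mode-zero Jacobi equation (B·u_*')'(s) + B(s)·(|II|²(s) − 2)·u_*(s) = 0 for all s ∈ ℝ, where |II|²(s) := 2·(B''(s)/B(s) − 1); and if s₀ > 0 satisfies the free boundary condition tanh(φ(s₀)) = B(s₀)·K/(a·sinh(2s₀)), then with r := arcosh(A(s₀)·cosh(φ(s₀))) its Robin defect equals u_*'(s₀) − coth(r)·u_*(s₀) = (B(s₀)² − 2·K²)/B(s₀)³. -/

import Mathlib

/-!
The boost field is `u_* = -B'`, and `B` has the first integral `B² B'² + K² = B² (B² + 1)`, so that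
`B'' = B + K² / B³` and `|II|² = 2 K² / B⁴`. Hence `B u_*' = -(B² + K² / B²)`, whose derivative
is `-B (|II|² - 2) u_*`.

The free boundary condition says `tanh φ = K / B'`. With `cosh r = A cosh φ` and `A² = B² + 1`, the
first integral turns `tanh² r = 1 - (1 - tanh² φ) / A²` into `(B / B')²`. Therefore
`coth r = B' / B`, and the Robin defect is `-B'' + B'² / B`.
-/

namespace MoriCatenoid

/-- Profile function `B(s) = √(a·cosh(2s) − 1/2)` of the Mori family. -/
noncomputable def B (a s : ℝ) : ℝ := Real.sqrt (a * Real.cosh (2 * s) - 1 / 2)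

/-- Profile function `A(s) = √(a·cosh(2s) + 1/2)` of the Mori family. -/
noncomputable def A (a s : ℝ) : ℝ := Real.sqrt (a * Real.cosh (2 * s) + 1 / 2)

/-- The constant `K = √(a² − 1/4)`. -/
noncomputable def K (a : ℝ) : ℝ := Real.sqrt (a ^ 2 - 1 / 4)

/-- The angle function `φ(s) = K·∫₀ˢ dt/(A(t)²·B(t))`. -/
noncomputable def φ (a s : ℝ) : ℝ := K a * ∫ t in (0:ℝ)..s, 1 / ((A a t) ^ 2 * B a t)

/-- The mode-one Jacobi field `f_*(s) = d/ds (A(s)·cosh(φ(s)))`. -/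
noncomputable def fstar (a s : ℝ) : ℝ := deriv (fun t => A a t * Real.cosh (φ a t)) s

/-- Squared norm of the second fundamental form, `|II|²(s) = 2·(B''(s)/B(s) − 1)`. -/
noncomputable def IIsq (a s : ℝ) : ℝ := 2 * (deriv (deriv (B a)) s / B a s - 1)

/-- The mode-`k` potential `W_k(s) = |II|²(s) − 2 − k²/B(s)²`. -/
noncomputable def W (a : ℝ) (k : ℤ) (s : ℝ) : ℝ := IIsq a s - 2 - (k : ℝ) ^ 2 / (B a s) ^ 2

/-- Inverse hyperbolic cosine: `arcosh x = log (x + √(x² − 1))`. -/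
noncomputable def arcosh (x : ℝ) : ℝ := Real.log (x + Real.sqrt (x ^ 2 - 1))

/-- The axial boost field `u_*(s) = −a·sinh(2s)/B(s)`. -/
noncomputable def ustar (a s : ℝ) : ℝ := -a * Real.sinh (2 * s) / B a s

/-- The radial quadratic form of mode `k`:
`S_k(u) = ∫_{−s₀}^{s₀} (B·u'² − B·W_k·u²) − coth(r)·B(s₀)·(u(s₀)² + u(−s₀)²)`,
where `u'` is the derivative of `u` within `[−s₀, s₀]`. -/
noncomputable def Sk (a s₀ r : ℝ) (k : ℤ) (u : ℝ → ℝ) : ℝ :=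
  (∫ s in (-s₀)..s₀,
      (B a s * (derivWithin u (Set.Icc (-s₀) s₀) s) ^ 2 - B a s * W a k s * u s ^ 2))
    - Real.cosh r / Real.sinh r * B a s₀ * (u s₀ ^ 2 + u (-s₀) ^ 2)

section General

lemma one_sub_tanh_sq (x : ℝ) : 1 - Real.tanh x ^ 2 = 1 / Real.cosh x ^ 2 := by
  rw [Real.tanh_eq_sinh_div_cosh, div_pow, Real.sinh_sq]
  field_simp
  ring

lemma tanh_eq_div_of_cosh_eq_mul_cosh {α β k p r θ : ℝ} (hα : α ^ 2 = β ^ 2 + 1) (hβ : 0 ≤ β)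
    (hp : 0 < p) (hpk : β ^ 2 * p ^ 2 + k ^ 2 = β ^ 2 * (β ^ 2 + 1))
    (hθ : Real.tanh θ = k / p) (hr : 0 ≤ r) (hrθ : Real.cosh r = α * Real.cosh θ) :
    Real.tanh r = β / p := by
  have tanh_r_nonneg : 0 ≤ Real.tanh r := by
    rw [Real.tanh_eq_sinh_div_cosh]
    exact div_nonneg (Real.sinh_nonneg_iff.mpr hr) (Real.cosh_pos r).le
  refine (sq_eq_sq₀ tanh_r_nonneg (by positivity)).mp ?_
  calc
    Real.tanh r ^ 2 = 1 - 1 / Real.cosh r ^ 2 := by rw [← one_sub_tanh_sq]; ring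
    _ = 1 - 1 / Real.cosh θ ^ 2 / α ^ 2 := by rw [hrθ, mul_pow, mul_comm, div_div]
    _ = 1 - (1 - (k / p) ^ 2) / (β ^ 2 + 1) := by rw [← one_sub_tanh_sq, hθ, hα]
    _ = (β / p) ^ 2 := by
      field_simp
      linear_combination hpk

lemma hasDerivAt_sq_add_div_sq {𝕜 : Type*} [NontriviallyNormedField 𝕜] {f : 𝕜 → 𝕜} {f' x : 𝕜}
    (c : 𝕜) (hf : HasDerivAt f f' x) (hx : f x ≠ 0) :
    HasDerivAt (fun t => f t ^ 2 + c / f t ^ 2) (2 * (f x - c / f x ^ 3) * f') x := by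
  refine ((hf.fun_pow 2).fun_add
    ((hasDerivAt_const x c).fun_div (hf.fun_pow 2) (pow_ne_zero 2 hx))).congr_deriv ?_
  field_simp
  ring

lemma arcosh_eq_real_arcosh (x : ℝ) : arcosh x = Real.arcosh x := rfl

end General

section Profile

variable {a : ℝ}

lemma le_mul_cosh (ha : 0 ≤ a) (x : ℝ) : a ≤ a * Real.cosh x :=
  le_mul_of_one_le_right ha (Real.one_le_cosh x)

lemma B_pos (ha : 1 / 2 < a) (s : ℝ) : 0 < B a s :=
  Real.sqrt_pos.mpr (by linarith [le_mul_cosh (by linarith) (2 * s)])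

lemma B_sq (ha : 1 / 2 ≤ a) (s : ℝ) : B a s ^ 2 = a * Real.cosh (2 * s) - 1 / 2 :=
  Real.sq_sqrt (by linarith [le_mul_cosh (by linarith) (2 * s)])

lemma A_sq (ha : 0 ≤ a) (s : ℝ) : A a s ^ 2 = a * Real.cosh (2 * s) + 1 / 2 :=
  Real.sq_sqrt (by linarith [le_mul_cosh ha (2 * s)])

lemma A_sq_eq_B_sq_add_one (ha : 1 / 2 ≤ a) (s : ℝ) : A a s ^ 2 = B a s ^ 2 + 1 := by
  rw [A_sq (by linarith), B_sq ha]
  ring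

lemma one_le_A (ha : 1 / 2 ≤ a) (s : ℝ) : 1 ≤ A a s :=
  Real.one_le_sqrt.mpr (by linarith [le_mul_cosh (by linarith) (2 * s)])

lemma K_sq (ha : 1 / 2 ≤ a) : K a ^ 2 = a ^ 2 - 1 / 4 :=
  Real.sq_sqrt (by nlinarith)

lemma B_mul_ustar (ha : 1 / 2 < a) (s : ℝ) : B a s * ustar a s = -a * Real.sinh (2 * s) :=
  mul_div_cancel₀ _ (B_pos ha s).ne'

lemma ustar_neg_of_pos (ha : 1 / 2 < a) {s : ℝ} (hs : 0 < s) : ustar a s < 0 := by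
  have sinh_pos : 0 < Real.sinh (2 * s) := Real.sinh_pos_iff.mpr (by linarith)
  exact div_neg_of_neg_of_pos (mul_neg_of_neg_of_pos (by linarith) sinh_pos) (B_pos ha s)

lemma B_sq_mul_ustar_sq_add_K_sq (ha : 1 / 2 < a) (s : ℝ) :
    B a s ^ 2 * ustar a s ^ 2 + K a ^ 2 = B a s ^ 2 * (B a s ^ 2 + 1) := by
  rw [← mul_pow, B_mul_ustar ha, mul_pow, Real.sinh_sq, B_sq ha.le, K_sq ha.le]
  ring

lemma hasDerivAt_B (ha : 1 / 2 < a) (s : ℝ) : HasDerivAt (B a) (-ustar a s) s := by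
  have radicand_ne_zero : a * Real.cosh (2 * s) - 1 / 2 ≠ 0 := by
    rw [← B_sq ha.le]
    exact (pow_pos (B_pos ha s) 2).ne'
  have h := ((((hasDerivAt_id' s).const_mul 2).cosh.const_mul a).sub_const (1 / 2)).sqrt
    radicand_ne_zero
  refine h.congr_deriv ?_
  rw [ustar, B]
  ring

lemma hasDerivAt_ustar (ha : 1 / 2 < a) (s : ℝ) :
    HasDerivAt (ustar a) (-(B a s + K a ^ 2 / B a s ^ 3)) s := by
  have hB : B a s ≠ 0 := (B_pos ha s).ne'
  have h := (((hasDerivAt_id' s).const_mul 2).sinh.const_mul (-a)).fun_div (hasDerivAt_B ha s) hB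
  refine h.congr_deriv ?_
  rw [← B_mul_ustar ha]
  field_simp
  linear_combination B_sq_mul_ustar_sq_add_K_sq ha s + 2 * B a s ^ 2 * B_sq ha.le s

lemma IIsq_eq (ha : 1 / 2 < a) (s : ℝ) : IIsq a s = 2 * K a ^ 2 / B a s ^ 4 := by
  have hB : B a s ≠ 0 := (B_pos ha s).ne'
  have deriv_B : deriv (B a) = -ustar a := funext fun t => (hasDerivAt_B ha t).deriv
  rw [IIsq, deriv_B, (hasDerivAt_ustar ha s).neg.deriv]
  field_simp
  ring

lemma B_mul_deriv_ustar (ha : 1 / 2 < a) (s : ℝ) :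
    B a s * deriv (ustar a) s = -(B a s ^ 2 + K a ^ 2 / B a s ^ 2) := by
  have hB : B a s ≠ 0 := (B_pos ha s).ne'
  rw [(hasDerivAt_ustar ha s).deriv]
  field_simp

lemma hasDerivAt_B_mul_deriv_ustar (ha : 1 / 2 < a) (s : ℝ) :
    HasDerivAt (fun t => B a t * deriv (ustar a) t)
      (2 * (B a s - K a ^ 2 / B a s ^ 3) * ustar a s) s := by
  simp only [B_mul_deriv_ustar ha]
  refine (hasDerivAt_sq_add_div_sq _ (hasDerivAt_B ha s) (B_pos ha s).ne').fun_neg.congr_deriv ?_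
  ring

lemma coth_arcosh_of_tanh_eq (ha : 1 / 2 < a) {s θ : ℝ} (hs : 0 < s)
    (hθ : Real.tanh θ = B a s * K a / (a * Real.sinh (2 * s))) :
    Real.cosh (arcosh (A a s * Real.cosh θ)) / Real.sinh (arcosh (A a s * Real.cosh θ)) =
      -ustar a s / B a s := by
  have hB : 0 < B a s := B_pos ha s
  have one_le : 1 ≤ A a s * Real.cosh θ :=
    one_le_mul_of_one_le_of_one_le (one_le_A ha.le s) (Real.one_le_cosh θ)
  have tanh_θ : Real.tanh θ = K a / -ustar a s := by
    have h : a * Real.sinh (2 * s) = B a s * -ustar a s := by linarith [B_mul_ustar ha s]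
    rw [hθ, h, mul_div_mul_left _ _ hB.ne']
  have first_integral : B a s ^ 2 * (-ustar a s) ^ 2 + K a ^ 2 = B a s ^ 2 * (B a s ^ 2 + 1) := by
    rw [neg_sq, B_sq_mul_ustar_sq_add_K_sq ha]
  rw [arcosh_eq_real_arcosh, ← inv_div, ← Real.tanh_eq_sinh_div_cosh,
    tanh_eq_div_of_cosh_eq_mul_cosh (A_sq_eq_B_sq_add_one ha.le s) hB.le
      (neg_pos.mpr (ustar_neg_of_pos ha hs)) first_integral tanh_θ
      (Real.arcosh_nonneg one_le) (Real.cosh_arcosh one_le), inv_div]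

end Profile

/-- The axial boost field `u_*(s) = −a·sinh(2s)/B(s)` satisfies the self-adjoint
mode-zero Jacobi equation `(B·u_*')' + B·(|II|² − 2)·u_* = 0` on `ℝ`, and under
the free boundary condition its Robin defect is
`u_*'(s₀) − coth(r)·u_*(s₀) = (B(s₀)² − 2·K²)/B(s₀)³`. -/
theorem ustar_jacobi_and_robin_defect (a : ℝ) (ha : 1 / 2 < a) :
    (∀ s : ℝ, deriv (fun t => B a t * deriv (ustar a) t) s
        + B a s * (IIsq a s - 2) * ustar a s = 0) ∧
    (∀ s₀ : ℝ, 0 < s₀ →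
      Real.tanh (φ a s₀) = B a s₀ * K a / (a * Real.sinh (2 * s₀)) →
      ∀ r : ℝ, r = arcosh (A a s₀ * Real.cosh (φ a s₀)) →
        deriv (ustar a) s₀ - Real.cosh r / Real.sinh r * ustar a s₀
          = (B a s₀ ^ 2 - 2 * K a ^ 2) / B a s₀ ^ 3) := by
  constructor
  · intro s
    have hB : B a s ≠ 0 := (B_pos ha s).ne'
    rw [(hasDerivAt_B_mul_deriv_ustar ha s).deriv, IIsq_eq ha]
    field_simp
    ring
  · rintro s₀ hs₀ hφ r rfl
    have hB : B a s₀ ≠ 0 := (B_pos ha s₀).ne'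
    rw [(hasDerivAt_ustar ha s₀).deriv, coth_arcosh_of_tanh_eq ha hs₀ hφ]
    field_simp
    linear_combination B_sq_mul_ustar_sq_add_K_sq ha s₀

end MoriCatenoid
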